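/- arXiv:math/0212065 — 2 statements merged into one kernel-verified Lean document; each statement's English description precedes it below -/
import Mathlib

section
/- Let (C, G, ∂) be a crossed module of groups, and form the semidirect product A = C ⋊ G with the homomorphisms s(c,g) = g and t(c,g) = ∂(c) * g. Then the set H = { (p, q) ∈ A × A : t(p) = s(q) } of composable pairs is a subgroup of the direct product A × A, and the composition map H → A sending the pair ((c,g), (c', ∂(c)*g)) to (c' * c, g) is a group homomorphism. (Equivalently, the composition of the internal category constructed from a crossed module satisfies the interchange law: ((c', ∂(c)g)·(d', ∂(d)h)) ∘ ((c,g)·(d,h)) = ((c', ∂(c)g) ∘ (c,g)) · ((d', ∂(d)h) ∘ (d,h)).) -/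
/-- For a crossed module `(C, G, ∂)` with semidirect product `A = C ⋊[φ] G`,
`s (c,g) = g`, `t (c,g) = ∂ c * g`, the set of composable pairs
`H = {(p, q) : t p = s q}` is a subgroup of `A × A`, and the composition
`((c,g), (c', ∂ c * g)) ↦ (c' * c, g)` is a group homomorphism `H →* A`. -/
theorem crossed_module_composition_is_hom
    {C G : Type*} [Group C] [Group G] (d : C →* G) (φ : G →* MulAut C)
    (hequiv : ∀ (g : G) (c : C), d (φ g c) = g * d c * g⁻¹)
    (hpeiffer : ∀ c c' : C, φ (d c) c' = c * c' * c⁻¹) :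
    ∃ H : Subgroup ((C ⋊[φ] G) × (C ⋊[φ] G)),
      (∀ p : (C ⋊[φ] G) × (C ⋊[φ] G),
        p ∈ H ↔ d p.1.left * p.1.right = p.2.right) ∧
      ∃ m : H →* C ⋊[φ] G,
        ∀ q : H, m q = ⟨(q : (C ⋊[φ] G) × (C ⋊[φ] G)).2.left *
            (q : (C ⋊[φ] G) × (C ⋊[φ] G)).1.left,
          (q : (C ⋊[φ] G) × (C ⋊[φ] G)).1.right⟩ := by
  refine ⟨{ carrier := {p | d p.1.left * p.1.right = p.2.right}
            mul_mem' := ?_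
            one_mem' := ?_
            inv_mem' := ?_ }, fun p => Iff.rfl, ?_⟩
  · intro p q hp hq
    simp only [Set.mem_setOf_eq] at hp hq ⊢
    simp only [Prod.fst_mul, Prod.snd_mul, SemidirectProduct.mul_left,
      SemidirectProduct.mul_right, map_mul, hequiv, ← hp, ← hq]
    group
  · simp
  · intro p hp
    simp only [Set.mem_setOf_eq] at hp ⊢
    simp only [Prod.fst_inv, Prod.snd_inv, SemidirectProduct.inv_left,
      SemidirectProduct.inv_right, hequiv, ← hp, map_inv d]
    group
  refine ⟨{ toFun := fun q => ⟨q.1.2.left * q.1.1.left, q.1.1.right⟩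
            map_one' := ?_
            map_mul' := ?_ }, fun q => rfl⟩
  · ext <;> simp
  · rintro ⟨p, hp⟩ ⟨q, hq⟩
    have hp' : d p.1.left * p.1.right = p.2.right := hp
    ext
    · simp only [Subgroup.coe_mul, MulMemClass.mk_mul_mk, Prod.fst_mul, Prod.snd_mul,
        SemidirectProduct.mul_left, ← hp', map_mul, MulAut.mul_apply, hpeiffer]
      group
    · simp
end

section
/- Let A and O be groups and let s, t : A → O and e : O → A be group homomorphisms with s ∘ e = id_O = t ∘ e. Let H = { (f, g) ∈ A × A : t(f) = s(g) } be the subgroup of composable pairs in the direct product A × A, and suppose m : H → A is a group homomorphism satisfying m(f, e(t(f))) = f and m(e(s(g)), g) = g for all f, g ∈ A (composition respecting identities). Then for all k, l in the kernel of s, the Peiffer identity holds: e(t(k)) * l * e(t(k))⁻¹ = k * l * k⁻¹. Consequently (Ker s, O, t|_{Ker s}), with the action x • k = e(x) * k * e(x)⁻¹, is a crossed module of groups. -/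
/-- An internal category in the category of groups gives a crossed module:
if `s, t : A →* O`, `e : O →* A` satisfy `s ∘ e = id = t ∘ e`, `H ≤ A × A` is the
subgroup of composable pairs, and the composition `m : H →* A` is a group
homomorphism respecting identities, then the Peiffer identity holds on `Ker s`
(and, with equivariance, `(Ker s, O, t|_{Ker s})` is a crossed module for the
action `x • k = e x * k * (e x)⁻¹`). -/
theorem internal_category_gives_crossed_module
    {A O : Type*} [Group A] [Group O] (s t : A →* O) (e : O →* A)
    (hse : ∀ x : O, s (e x) = x) (hte : ∀ x : O, t (e x) = x)
    (H : Subgroup (A × A))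
    (hH : ∀ p : A × A, p ∈ H ↔ t p.1 = s p.2)
    (m : H →* A)
    (hid_left : ∀ f : A, m ⟨(f, e (t f)), (hH _).mpr (hse (t f)).symm⟩ = f)
    (hid_right : ∀ g : A, m ⟨(e (s g), g), (hH _).mpr (hte (s g))⟩ = g) :
    (∀ k ∈ s.ker, ∀ l ∈ s.ker, e (t k) * l * (e (t k))⁻¹ = k * l * k⁻¹) ∧
    (∀ x : O, ∀ k ∈ s.ker, t (e x * k * (e x)⁻¹) = x * t k * x⁻¹) := by
  have key : ∀ a l : A, t a = 1 → s l = 1 → a * l = l * a := by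
    intro a l ha hl
    have h1 : ((a, 1) : A × A) ∈ H := (hH _).mpr (by simp [ha])
    have h2 : ((1, l) : A × A) ∈ H := (hH _).mpr (by simp [hl])
    have m1 : m ⟨(a, 1), h1⟩ = a := by
      have h := hid_left a
      simp only [ha, map_one] at h
      exact h
    have m2 : m ⟨(1, l), h2⟩ = l := by
      have h := hid_right l
      simp only [hl, map_one] at h
      exact h
    have hc : (⟨(a, 1), h1⟩ : H) * ⟨(1, l), h2⟩ = ⟨(1, l), h2⟩ * ⟨(a, 1), h1⟩ := by
      apply Subtype.ext
      simp
    have h := congrArg m hc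
    rwa [map_mul, map_mul, m1, m2] at h
  refine ⟨fun k _ l hl => ?_, fun x k _ => by simp [hte]⟩
  have h := key (k⁻¹ * e (t k)) l (by simp [hte]) hl
  calc e (t k) * l * (e (t k))⁻¹ = k * (k⁻¹ * e (t k) * l) * (e (t k))⁻¹ := by group
    _ = k * (l * (k⁻¹ * e (t k))) * (e (t k))⁻¹ := by rw [h]
    _ = k * l * k⁻¹ := by group
end
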